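/- Let d ≥ 1, let H_B and H_{R₂} be finite-dimensional complex Hilbert spaces, and let ψ ∈ ℂ^d_A ⊗ H_B ⊗ (ℂ^d_{R₁} ⊗ H_{R₂}) be a unit vector of the form ψ = ∑_{z=0}^{d−1} √p_z |z⟩_A ⊗ Ψ_z, where p is a probability distribution on {0,…,d−1} and Ψ_z ∈ H_B ⊗ ℂ^d_{R₁} ⊗ H_{R₂} is the image of |φ_z⟩ ⊗ |z⟩ under the canonical isomorphism (H_B ⊗ H_{R₂}) ⊗ ℂ^d_{R₁} ≅ H_B ⊗ ℂ^d_{R₁} ⊗ H_{R₂}, for unit vectors |φ_z⟩ ∈ H_B ⊗ H_{R₂} (this expresses the condition H(Z^A|R) = 0, with R = R₁R₂). If p_secure(X^A|R) ≤ ε for some ε ≥ 0 (with R = ℂ^d_{R₁} ⊗ H_{R₂}), then there exists a POVM (Λ_z)_{z=0}^{d−1} on H_B with guessing probability ∑_z ⟨ψ| (|z⟩⟨z| ⊗ Λ_z ⊗ 1_R) |ψ⟩ ≥ 1 − √(2ε). -/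

import Mathlib

open Matrix BigOperators Finset
open scoped Classical ComplexOrder

noncomputable section

/-- The positive semidefinite square root of a matrix (zero if the matrix is not PSD). -/
def psdSqrt {ι : Type*} [Fintype ι] [DecidableEq ι] (M : Matrix ι ι ℂ) : Matrix ι ι ℂ :=
  if h : M.PosSemidef then
    (h.1.eigenvectorUnitary : Matrix ι ι ℂ) *
      Matrix.diagonal (fun i => (Real.sqrt (h.1.eigenvalues i) : ℂ)) *
      (star h.1.eigenvectorUnitary : Matrix ι ι ℂ)
  else 0

/-- Trace norm ‖M‖₁ = Tr √(M†M). -/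
def traceNorm {ι : Type*} [Fintype ι] [DecidableEq ι] (M : Matrix ι ι ℂ) : ℝ :=
  ((psdSqrt (Mᴴ * M)).trace).re

/-- Trace distance D(ρ,σ) = ‖ρ−σ‖₁/2. -/
def traceDist {ι : Type*} [Fintype ι] [DecidableEq ι] (ρ σ : Matrix ι ι ℂ) : ℝ :=
  traceNorm (ρ - σ) / 2

/-- Fidelity F(ρ,σ) = ‖√ρ√σ‖₁. -/
def fidelity {ι : Type*} [Fintype ι] [DecidableEq ι] (ρ σ : Matrix ι ι ℂ) : ℝ :=
  traceNorm (psdSqrt ρ * psdSqrt σ)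

/-- ω = exp(2πi/d). -/
def omega (d : ℕ) : ℂ := Complex.exp (2 * Real.pi * Complex.I / d)

/-- Conjugate (X) basis vector |x̃⟩ of ℂ^d, component at z: ω^{−xz}/√d. -/
def xVec (d : ℕ) (x z : Fin d) : ℂ :=
  (starRingEnd ℂ) (omega d ^ (x.val * z.val)) / (Real.sqrt d : ℂ)

/-- Component of (⟨x̃|⊗1_{BR})|ψ⟩. -/
def condVecX {d : ℕ} {β r : Type*} [Fintype β] [Fintype r]
    (ψ : Fin d × β × r → ℂ) (x : Fin d) (p : β × r) : ℂ :=
  ∑ z, (starRingEnd ℂ) (xVec d x z) * ψ (z, p.1, p.2)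

/-- Unnormalized conditional state ϑ_x^R = Tr_B[(⟨x̃|⊗1)|ψ⟩⟨ψ|(|x̃⟩⊗1)]. -/
def thetaR {d : ℕ} {β r : Type*} [Fintype β] [Fintype r]
    (ψ : Fin d × β × r → ℂ) (x : Fin d) : Matrix r r ℂ :=
  Matrix.of fun s s' => ∑ b, condVecX ψ x (b, s) * (starRingEnd ℂ) (condVecX ψ x (b, s'))

/-- X-measured cq marginal ψ̄_X^{AR} = ∑_x |x̃⟩⟨x̃| ⊗ ϑ_x^R. -/
def cqMarginalX {d : ℕ} {β r : Type*} [Fintype β] [Fintype r]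
    (ψ : Fin d × β × r → ℂ) : Matrix (Fin d × r) (Fin d × r) ℂ :=
  Matrix.of fun p q =>
    ∑ x, xVec d x p.1 * (starRingEnd ℂ) (xVec d x q.1) * thetaR ψ x p.2 q.2

/-- Reduced state ψ^R = Tr_{AB}|ψ⟩⟨ψ|. -/
def reducedR {α β r : Type*} [Fintype α] [Fintype β] [Fintype r]
    (ψ : α × β × r → ℂ) : Matrix r r ℂ :=
  Matrix.of fun s s' => ∑ z, ∑ b, ψ (z, b, s) * (starRingEnd ℂ) (ψ (z, b, s'))

/-- The ideal key state (1/d) 1_A ⊗ ψ^R. -/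
def idealKey {d : ℕ} {β r : Type*} [Fintype β] [Fintype r]
    (ψ : Fin d × β × r → ℂ) : Matrix (Fin d × r) (Fin d × r) ℂ :=
  Matrix.of fun p q => (if p.1 = q.1 then ((d : ℂ))⁻¹ else 0) * reducedR ψ p.2 q.2

/-- Security parameter p_secure(X^A|R) = D(ψ̄_X^{AR}, (1/d)1⊗ψ^R). -/
def pSecure {d : ℕ} {β r : Type*} [Fintype β] [DecidableEq β] [Fintype r] [DecidableEq r]
    (ψ : Fin d × β × r → ℂ) : ℝ :=
  traceDist (cqMarginalX ψ) (idealKey ψ)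

/-- Guessing probability ∑_z ⟨ψ|(|z⟩⟨z| ⊗ Λ_z ⊗ 1_R)|ψ⟩. -/
def pGuess {d : ℕ} {β r : Type*} [Fintype β] [Fintype r]
    (ψ : Fin d × β × r → ℂ) (Λ : Fin d → Matrix β β ℂ) : ℝ :=
  (∑ z, ∑ b, ∑ b', ∑ s, (starRingEnd ℂ) (ψ (z, b, s)) * Λ z b b' * ψ (z, b', s)).re

end


/-- The matrix `U diag(f) Uᴴ`. -/
noncomputable def conjDiag {ι : Type*} [Fintype ι] [DecidableEq ι] (U : Matrix ι ι ℂ)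
    (f : ι → ℝ) : Matrix ι ι ℂ :=
  U * diagonal (fun i => (f i : ℂ)) * Uᴴ

section ConjDiag

variable {ι : Type*} [Fintype ι] [DecidableEq ι]

theorem conjDiag_mul {U : Matrix ι ι ℂ} (hU : Uᴴ * U = 1) (f g : ι → ℝ) :
    conjDiag U f * conjDiag U g = conjDiag U (fun i => f i * g i) := by
  have h : conjDiag U f * conjDiag U g
      = U * diagonal (fun i => (f i : ℂ)) * (Uᴴ * U) * diagonal (fun i => (g i : ℂ)) * Uᴴ := by
    simp only [conjDiag, Matrix.mul_assoc]
  rw [h, hU, Matrix.mul_one, Matrix.mul_assoc U, diagonal_mul_diagonal]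
  simp [conjDiag]

theorem conjDiag_one {U : Matrix ι ι ℂ} (hU : U * Uᴴ = 1) : conjDiag U (fun _ => 1) = 1 := by
  simp [conjDiag, hU]

theorem conjDiag_sub (U : Matrix ι ι ℂ) (f g : ι → ℝ) :
    conjDiag U f - conjDiag U g = conjDiag U (fun i => f i - g i) := by
  simp only [conjDiag, ← Matrix.sub_mul, ← Matrix.mul_sub, diagonal_sub]
  simp

theorem conjDiag_add (U : Matrix ι ι ℂ) (f g : ι → ℝ) :
    conjDiag U f + conjDiag U g = conjDiag U (fun i => f i + g i) := by
  simp only [conjDiag, ← Matrix.add_mul, ← Matrix.mul_add, diagonal_add]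
  simp

theorem conjDiag_isHermitian (U : Matrix ι ι ℂ) (f : ι → ℝ) : (conjDiag U f).IsHermitian := by
  apply isHermitian_mul_mul_conjTranspose
  simp [IsHermitian, diagonal_conjTranspose, Pi.star_def]

theorem conjDiag_posSemidef (U : Matrix ι ι ℂ) {f : ι → ℝ} (hf : ∀ i, 0 ≤ f i) :
    (conjDiag U f).PosSemidef := by
  apply PosSemidef.mul_mul_conjTranspose_same
  apply PosSemidef.diagonal
  intro i
  simpa using hf i

theorem Matrix.IsHermitian.eq_conjDiag {A : Matrix ι ι ℂ} (hA : A.IsHermitian) :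
    A = conjDiag (hA.eigenvectorUnitary : Matrix ι ι ℂ) hA.eigenvalues := by
  conv_lhs => rw [hA.spectral_theorem, Unitary.conjStarAlgAut_apply]
  rfl

theorem Matrix.IsHermitian.eigenvectorUnitary_conjTranspose_mul {A : Matrix ι ι ℂ}
    (hA : A.IsHermitian) :
    (hA.eigenvectorUnitary : Matrix ι ι ℂ)ᴴ * (hA.eigenvectorUnitary : Matrix ι ι ℂ) = 1 :=
  Unitary.coe_star_mul_self _

theorem Matrix.IsHermitian.eigenvectorUnitary_mul_conjTranspose {A : Matrix ι ι ℂ}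
    (hA : A.IsHermitian) :
    (hA.eigenvectorUnitary : Matrix ι ι ℂ) * (hA.eigenvectorUnitary : Matrix ι ι ℂ)ᴴ = 1 :=
  Unitary.coe_mul_star_self _

/-- The square root of a positive semidefinite matrix together with its pseudo-inverse. -/
theorem Matrix.PosSemidef.exists_sqrt_pinv {T : Matrix ι ι ℂ} (hT : T.PosSemidef) :
    ∃ A G : Matrix ι ι ℂ, A.PosSemidef ∧ G.IsHermitian ∧ A * A = T ∧ T * G = A ∧
      G * T * G * G = G := by
  have hU := hT.1.eigenvectorUnitary_conjTranspose_mul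
  have hTd := hT.1.eq_conjDiag
  set U := (hT.1.eigenvectorUnitary : Matrix ι ι ℂ)
  set t := hT.1.eigenvalues
  have ht : ∀ i, 0 ≤ t i := hT.eigenvalues_nonneg
  refine ⟨conjDiag U (fun i => √(t i)), conjDiag U (fun i => (√(t i))⁻¹),
    conjDiag_posSemidef U fun i => Real.sqrt_nonneg _, conjDiag_isHermitian U _, ?_, ?_, ?_⟩
  · rw [conjDiag_mul hU, hTd]
    simp only [Real.mul_self_sqrt (ht _)]
  · rw [hTd, conjDiag_mul hU]
    congr 1; ext i
    rw [← div_eq_mul_inv, Real.div_sqrt]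
  · rw [hTd, conjDiag_mul hU, conjDiag_mul hU, conjDiag_mul hU]
    congr 1; ext i
    by_cases h : √(t i) = 0
    · simp [h]
    · nth_rewrite 2 [← Real.mul_self_sqrt (ht i)]
      field_simp

theorem Matrix.PosSemidef.trace_mul_re_nonneg {A B : Matrix ι ι ℂ} (hA : A.PosSemidef)
    (hB : B.PosSemidef) : 0 ≤ (A * B).trace.re := by
  obtain ⟨C, -, hC, -, hCC, -⟩ := hA.exists_sqrt_pinv
  rw [← hCC, Matrix.mul_assoc, trace_mul_comm]
  have h := (hB.mul_mul_conjTranspose_same C).trace_nonneg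
  rw [hC.1.eq] at h
  exact (Complex.le_def.1 h).1

/-- A form of the Powers–Størmer inequality, with the trace norm of `A² - C²` witnessed by a
unitary. -/
theorem exists_unitary_powers_stormer {A C : Matrix ι ι ℂ} (hA : A.PosSemidef)
    (hC : C.PosSemidef) : ∃ S : Matrix ι ι ℂ, S * Sᴴ = 1 ∧
      ((A - C) * (A - C)).trace.re ≤ (S * (A * A - C * C)).trace.re := by
  have hD : (A - C).IsHermitian := hA.1.sub hC.1
  have hU := hD.eigenvectorUnitary_conjTranspose_mul
  have hU' := hD.eigenvectorUnitary_mul_conjTranspose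
  have hDd := hD.eq_conjDiag
  set U := (hD.eigenvectorUnitary : Matrix ι ι ℂ)
  set l := hD.eigenvalues
  set sg : ι → ℝ := fun i => if 0 ≤ l i then 1 else -1 with hsg
  set S := conjDiag U sg with hS
  set N := conjDiag U (fun i => |l i|) with hN
  have hsl : ∀ i, sg i * l i = |l i| := by
    intro i
    simp only [hsg]
    split_ifs with h
    · simp [abs_of_nonneg h]
    · simp [abs_of_neg (not_le.1 h)]
  have hSD : S * (A - C) = N := by
    rw [hDd, hS, conjDiag_mul hU, hN]; simp only [hsl]
  have hDS : (A - C) * S = N := by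
    rw [hDd, hS, conjDiag_mul hU, hN]; simp only [mul_comm _ (sg _), hsl]
  have h1 : (N - (A - C)).PosSemidef := by
    rw [hDd, hN, conjDiag_sub]
    exact conjDiag_posSemidef U fun i => sub_nonneg.2 (le_abs_self _)
  have h2 : (N + (A - C)).PosSemidef := by
    rw [hDd, hN, conjDiag_add]
    exact conjDiag_posSemidef U fun i => by linarith [neg_abs_le (l i)]
  refine ⟨S, ?_, ?_⟩
  · rw [(conjDiag_isHermitian U sg).eq, conjDiag_mul hU, ← conjDiag_one hU']
    congr 1; ext i
    simp only [hsg]; split_ifs <;> norm_num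
  · have e1 : (S * (A * A - C * C)).trace = (N * A).trace + (N * C).trace := by
      have : S * (A * A - C * C) = S * (A - C) * A + S * (C * (A - C)) := by noncomm_ring
      rw [this, trace_add, hSD, trace_mul_comm S, Matrix.mul_assoc, hDS, trace_mul_comm C]
    have e2 : (N - (A - C)) * A + (N + (A - C)) * C
        = N * A + N * C - (A - C) * (A - C) := by noncomm_ring
    have h3 := h1.trace_mul_re_nonneg hA
    have h4 := h2.trace_mul_re_nonneg hC
    have e3 := congrArg (fun M => (Matrix.trace M).re) e2
    simp only [trace_add, trace_sub, Complex.add_re, Complex.sub_re] at e3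
    rw [e1, Complex.add_re]
    linarith

theorem traceNorm_eq_sum_sqrt (X : Matrix ι ι ℂ) :
    traceNorm X = ∑ i, √((posSemidef_conjTranspose_mul_self X).1.eigenvalues i) := by
  have h := posSemidef_conjTranspose_mul_self X
  rw [traceNorm, psdSqrt, dif_pos h, trace_mul_cycle, Unitary.coe_star_mul_self, Matrix.one_mul,
    trace_diagonal]
  simp

theorem mul_conjTranspose_self_apply_self {m n : Type*} [Fintype n] (K : Matrix m n ℂ) (i : m) :
    (K * Kᴴ) i i = ((∑ j, ‖K i j‖ ^ 2 : ℝ) : ℂ) := by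
  simp [Matrix.mul_apply, Complex.mul_conj']

theorem trace_mul_re_le_traceNorm {S : Matrix ι ι ℂ} (hS : S * Sᴴ = 1) (X : Matrix ι ι ℂ) :
    (S * X).trace.re ≤ traceNorm X := by
  have h := posSemidef_conjTranspose_mul_self X
  have hU := h.1.eigenvectorUnitary_conjTranspose_mul
  have hU' := h.1.eigenvectorUnitary_mul_conjTranspose
  have hXd := h.1.eq_conjDiag
  rw [traceNorm_eq_sum_sqrt]
  set U := (h.1.eigenvectorUnitary : Matrix ι ι ℂ)
  set t := h.1.eigenvalues
  set K := Uᴴ * S with hK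
  set Y := X * U with hY
  have hKK : K * Kᴴ = 1 := by
    have : K * Kᴴ = Uᴴ * (S * Sᴴ) * U := by simp [hK, Matrix.mul_assoc]
    rw [this, hS, Matrix.mul_one, hU]
  have hYY : Yᴴ * Y = diagonal (fun i => (t i : ℂ)) := by
    have : Yᴴ * Y = Uᴴ * (Xᴴ * X) * U := by simp [hY, Matrix.mul_assoc]
    rw [this, hXd, conjDiag]
    have : Uᴴ * (U * diagonal (fun i => (t i : ℂ)) * Uᴴ) * U
        = (Uᴴ * U) * diagonal (fun i => (t i : ℂ)) * (Uᴴ * U) := by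
      simp only [Matrix.mul_assoc]
    rw [this, hU, Matrix.one_mul, Matrix.mul_one]
  have hKn : ∀ i, ∑ j, ‖K i j‖ ^ 2 = 1 := fun i => by
    have := mul_conjTranspose_self_apply_self K i
    rw [hKK, one_apply_eq] at this
    exact_mod_cast this.symm
  have hYn : ∀ i, ∑ j, ‖Y j i‖ ^ 2 = t i := fun i => by
    have := mul_conjTranspose_self_apply_self Yᴴ i
    rw [conjTranspose_conjTranspose, hYY, diagonal_apply_eq] at this
    simp only [conjTranspose_apply, norm_star] at this
    exact_mod_cast this.symm
  have htr : (S * X).trace = ∑ i, ∑ j, K i j * Y j i := by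
    have : (K * Y).trace = (S * X).trace := by
      have e : K * Y = Uᴴ * (S * X * U) := by simp [hK, hY, Matrix.mul_assoc]
      rw [e, trace_mul_comm, Matrix.mul_assoc, hU', Matrix.mul_one]
    rw [← this]
    simp [trace, Matrix.mul_apply]
  rw [htr, Complex.re_sum]
  refine Finset.sum_le_sum fun i _ => ?_
  calc (∑ j, K i j * Y j i).re ≤ ‖∑ j, K i j * Y j i‖ := Complex.re_le_norm _
    _ ≤ ∑ j, ‖K i j‖ * ‖Y j i‖ := by
        simpa only [norm_mul] using norm_sum_le univ fun j => K i j * Y j i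
    _ ≤ √(∑ j, ‖K i j‖ ^ 2) * √(∑ j, ‖Y j i‖ ^ 2) := Real.sum_mul_le_sqrt_mul_sqrt _ _ _
    _ = √(t i) := by rw [hKn, hYn, Real.sqrt_one, one_mul]

open scoped MatrixOrder Matrix.Norms.L2Operator in
/-- A positive semidefinite matrix that is block diagonal along `f` has a positive semidefinite
square root with the same property. -/
theorem Matrix.PosSemidef.exists_blockDiagonal_sqrt {T : Matrix ι ι ℂ} (hT : T.PosSemidef)
    (f : ι → ℕ) (hf : ∀ i j, f i ≠ f j → T i j = 0) :
    ∃ C : Matrix ι ι ℂ, C.PosSemidef ∧ C * C = T ∧ ∀ i j, f i ≠ f j → C i j = 0 := by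
  have hcomm : Commute T (diagonal fun i => (f i : ℂ)) := by
    ext i j
    rw [mul_diagonal, diagonal_mul]
    by_cases h : f i = f j
    · rw [h, mul_comm]
    · simp [hf i j h]
  have hC : Commute (CFC.sqrt T) (diagonal fun i => (f i : ℂ)) := hcomm.cfcₙ_nnreal _
  refine ⟨CFC.sqrt T, nonneg_iff_posSemidef.1 (CFC.sqrt_nonneg T),
    CFC.sqrt_mul_sqrt_self T (nonneg_iff_posSemidef.2 hT), fun i j hij => ?_⟩
  have h := congrFun (congrFun hC.eq i) j
  rw [mul_diagonal, diagonal_mul, mul_comm, ← sub_eq_zero, ← sub_mul] at h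
  refine (mul_eq_zero.1 h).resolve_left ?_
  exact sub_ne_zero.2 (by exact_mod_cast hij.symm)

end ConjDiag

theorem trace_mul_self_re_of_isHermitian {ι : Type*} [Fintype ι] {A : Matrix ι ι ℂ}
    (hA : A.IsHermitian) :
    (A * A).trace.re = ∑ i, ∑ j, ‖A i j‖ ^ 2 := by
  nth_rewrite 2 [← hA.eq]
  simp only [trace, diag_apply, mul_conjTranspose_self_apply_self]
  rw [← Complex.ofReal_sum, Complex.ofReal_re]

section Dephasing

variable {ι β κ : Type*} [Fintype ι] [DecidableEq ι] [Fintype β] [DecidableEq β] [DecidableEq κ]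

/-- The block-diagonal part of a matrix, with blocks given by the fibres of `f`. -/
noncomputable def dephase (f : ι → κ) (T : Matrix ι ι ℂ) : Matrix ι ι ℂ :=
  Matrix.of fun i j => if f i = f j then T i j else 0

theorem dephase_eq_sum [Fintype κ] (f : ι → κ) (T : Matrix ι ι ℂ) :
    dephase f T = ∑ z, diagonal (fun i => if f i = z then (1 : ℂ) else 0) * T *
      (diagonal (fun i => if f i = z then (1 : ℂ) else 0))ᴴ := by
  ext i j
  simp [dephase, Matrix.sum_apply, diagonal_conjTranspose, mul_diagonal, diagonal_mul, eq_comm,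
    apply_ite (starRingEnd ℂ)]

theorem Matrix.PosSemidef.dephase [Fintype κ] (f : ι → κ) {T : Matrix ι ι ℂ}
    (hT : T.PosSemidef) : (dephase f T).PosSemidef := by
  rw [dephase_eq_sum]
  exact posSemidef_sum _ fun z _ => hT.mul_mul_conjTranspose_same _

/-- The pretty good measurement: with `A = √(M Mᴴ)`, it identifies the block label with
probability at least the squared Hilbert–Schmidt norm of the block-diagonal part of `A`. -/
theorem exists_povm_of_sqrt [Fintype κ] (f : ι → κ) (z₀ : κ) (M : Matrix ι β ℂ) :
    ∃ A : Matrix ι ι ℂ, A.PosSemidef ∧ A * A = M * Mᴴ ∧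
      ∃ Λ : κ → Matrix β β ℂ, (∀ z, (Λ z).PosSemidef) ∧ ∑ z, Λ z = 1 ∧
        ∑ i, ∑ j, (if f i = f j then ‖A i j‖ ^ 2 else 0)
          ≤ (∑ i, (M * Λ (f i) * Mᴴ) i i).re := by
  obtain ⟨A, G, hA, hG, hAA, hTG, hGT⟩ := (posSemidef_self_mul_conjTranspose M).exists_sqrt_pinv
  set W : Matrix ι β ℂ := G * M with hW
  have hWt : Wᴴ = Mᴴ * G := by rw [hW, conjTranspose_mul, hG.eq]
  have hMW : M * Wᴴ = A := by rw [hWt, ← Matrix.mul_assoc, hTG]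
  have hWM : W * Mᴴ = A := by rw [← hA.1.eq, ← hMW]; simp
  have hWWW : W * Wᴴ * W = W := by
    have : W * Wᴴ * W = G * (M * Mᴴ) * G * G * M := by
      rw [hWt, hW]; simp only [Matrix.mul_assoc]
    rw [this, hGT]
  set E : Matrix β β ℂ := 1 - Wᴴ * W with hE
  have hEE : Eᴴ * E = E := by
    have h : Wᴴ * W * (Wᴴ * W) = Wᴴ * W := by
      rw [Matrix.mul_assoc, ← Matrix.mul_assoc W, hWWW]
    rw [hE]
    simp only [conjTranspose_sub, conjTranspose_one, conjTranspose_mul,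
      conjTranspose_conjTranspose, Matrix.sub_mul, Matrix.mul_sub, Matrix.one_mul,
      Matrix.mul_one, h]
    abel
  have hEpos : E.PosSemidef := hEE ▸ posSemidef_conjTranspose_mul_self E
  set P : κ → Matrix ι ι ℂ := fun z => diagonal fun i => if f i = z then 1 else 0 with hP
  have hPpos : ∀ z, (P z).PosSemidef := fun z =>
    PosSemidef.diagonal fun i => by simp only [Pi.zero_apply]; split_ifs <;> simp
  have hPsum : ∑ z, P z = 1 := by
    ext i j
    simp only [hP, Matrix.sum_apply, diagonal_apply, one_apply]
    split_ifs <;> simp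
  have hQpos : ∀ z, (if z = z₀ then E else 0).PosSemidef := fun z => by
    split_ifs
    · exact hEpos
    · exact PosSemidef.zero
  refine ⟨A, hA, hAA, fun z => Wᴴ * P z * W + if z = z₀ then E else 0, fun z => ?_, ?_, ?_⟩
  · exact ((hPpos z).conjTranspose_mul_mul_same W).add (hQpos z)
  · rw [Finset.sum_add_distrib, ← Matrix.sum_mul, ← Matrix.mul_sum, hPsum]
    simp [hE]
  · rw [Complex.re_sum]
    refine Finset.sum_le_sum fun i _ => ?_
    have h1 : M * (Wᴴ * P (f i) * W + if f i = z₀ then E else 0) * Mᴴ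
        = A * P (f i) * A + M * (if f i = z₀ then E else 0) * Mᴴ := by
      have : M * (Wᴴ * P (f i) * W) * Mᴴ = (M * Wᴴ) * P (f i) * (W * Mᴴ) := by
        simp only [Matrix.mul_assoc]
      rw [Matrix.mul_add, Matrix.add_mul, this, hMW, hWM]
    have h2 : (A * P (f i) * A) i i
        = ((∑ j, (if f i = f j then ‖A i j‖ ^ 2 else 0) : ℝ) : ℂ) := by
      rw [Matrix.mul_apply, Complex.ofReal_sum]
      refine Finset.sum_congr rfl fun j _ => ?_
      rw [hP, mul_diagonal, ← hA.1.apply j i]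
      by_cases h : f i = f j
      · simp [h, Complex.mul_conj']
      · simp [h, Ne.symm h]
    have h3 : 0 ≤ ((M * (if f i = z₀ then E else 0) * Mᴴ) i i).re :=
      (Complex.le_def.1 (((hQpos (f i)).mul_mul_conjTranspose_same M).diag_nonneg (i := i))).1
    rw [h1, Matrix.add_apply, Complex.add_re, h2, Complex.ofReal_re]
    linarith

/-- If `M Mᴴ` is `δ`-close in trace norm to its dephased version, then some POVM identifies the
block label with probability at least `1 - δ`. -/
theorem exists_povm_of_near_dephase {d : ℕ} (f : ι → Fin d) (z₀ : Fin d) (M : Matrix ι β ℂ)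
    (hM : (M * Mᴴ).trace = 1) {δ : ℝ}
    (hδ : ∀ S : Matrix ι ι ℂ, S * Sᴴ = 1 →
      (S * (M * Mᴴ - dephase f (M * Mᴴ))).trace.re ≤ δ) :
    ∃ Λ : Fin d → Matrix β β ℂ, (∀ z, (Λ z).PosSemidef) ∧ ∑ z, Λ z = 1 ∧
      1 - δ ≤ (∑ i, (M * Λ (f i) * Mᴴ) i i).re := by
  obtain ⟨A, hA, hAA, Λ, hΛ, hΛ1, hg⟩ := exists_povm_of_sqrt f z₀ M
  have hσ := (posSemidef_self_mul_conjTranspose M).dephase f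
  obtain ⟨C, hC, hCC, hCf⟩ := hσ.exists_blockDiagonal_sqrt (fun i => (f i).val) fun i j h => by
    have : f i ≠ f j := fun e => h (congrArg _ e)
    simp [dephase, this]
  obtain ⟨S, hS, hPS⟩ := exists_unitary_powers_stormer hA hC
  refine ⟨Λ, hΛ, hΛ1, le_trans ?_ hg⟩
  have hb := hδ S hS
  rw [hAA, hCC] at hPS
  have hσ1 : (dephase f (M * Mᴴ)).trace = 1 := by
    rw [← hM]; simp [trace, dephase]
  have hC1 : ∑ i, ∑ j, ‖C i j‖ ^ 2 = 1 := by
    rw [← trace_mul_self_re_of_isHermitian hC.1, hCC, hσ1, Complex.one_re]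
  have hexp : ((A - C) * (A - C)).trace = 2 - 2 * (A * C).trace := by
    have : (A - C) * (A - C) = A * A - A * C - C * A + C * C := by noncomm_ring
    rw [this, trace_add, trace_sub, trace_sub, trace_mul_comm C A, hAA, hCC, hM, hσ1]
    ring
  have hAC : 2 * (A * C).trace.re
      ≤ ∑ i, ∑ j, (if f i = f j then ‖A i j‖ ^ 2 else 0) + ∑ i, ∑ j, ‖C i j‖ ^ 2 := by
    simp only [trace, diag_apply, Matrix.mul_apply, Complex.re_sum]
    rw [Finset.mul_sum, ← Finset.sum_add_distrib]
    refine Finset.sum_le_sum fun i _ => ?_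
    rw [Finset.mul_sum, ← Finset.sum_add_distrib]
    refine Finset.sum_le_sum fun j _ => ?_
    have hsym : ‖C j i‖ = ‖C i j‖ := by rw [← hC.1.apply i j, norm_star]
    split_ifs with h
    · have h1 := Complex.re_le_norm (A i j * C j i)
      rw [norm_mul, hsym] at h1
      nlinarith [sq_nonneg (‖A i j‖ - ‖C i j‖)]
    · have : C j i = 0 := hCf j i fun e => h (Fin.ext e).symm
      simp [this]
  rw [hexp] at hPS
  simp only [Complex.sub_re, Complex.mul_re, Complex.re_ofNat, Complex.im_ofNat, zero_mul,
    sub_zero] at hPS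
  linarith

end Dephasing

theorem isPrimitiveRoot_omega {d : ℕ} (hd : d ≠ 0) : IsPrimitiveRoot (omega d) d :=
  Complex.isPrimitiveRoot_exp d hd

theorem conj_omega_mul_omega {d : ℕ} (hd : d ≠ 0) :
    (starRingEnd ℂ) (omega d) * omega d = 1 := by
  rw [mul_comm, Complex.mul_conj', (isPrimitiveRoot_omega hd).norm'_eq_one hd]
  simp

theorem sum_xVec_mul {d : ℕ} [NeZero d] (a a' k k' : Fin d) :
    ∑ x, xVec d x a * (starRingEnd ℂ) (xVec d x a') *
      ((starRingEnd ℂ) (xVec d x k) * xVec d x k')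
      = if a - k = a' - k' then (d : ℂ)⁻¹ else 0 := by
  have hd : d ≠ 0 := NeZero.ne d
  have hdC : (d : ℂ) ≠ 0 := by exact_mod_cast hd
  have hω := isPrimitiveRoot_omega hd
  have hc := conj_omega_mul_omega hd
  set w := omega d with hw
  set v := (starRingEnd ℂ) w with hv
  set ζ : ℂ := v ^ (a.val + k'.val) * w ^ (a'.val + k.val) with hζ
  have hvv : (starRingEnd ℂ) v = w := Complex.conj_conj w
  have hsq : (Real.sqrt d : ℂ) * (Real.sqrt d : ℂ) = d := by
    rw [← Complex.ofReal_mul, Real.mul_self_sqrt (Nat.cast_nonneg d), Complex.ofReal_natCast]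
  have hterm : ∀ x : Fin d, xVec d x a * (starRingEnd ℂ) (xVec d x a') *
      ((starRingEnd ℂ) (xVec d x k) * xVec d x k') = ζ ^ x.val * ((d : ℂ)⁻¹ * (d : ℂ)⁻¹) := by
    intro x
    simp only [xVec, map_div₀, map_pow, Complex.conj_ofReal, ← hw, ← hv, hvv]
    rw [← hsq, hζ]
    have h0 : (Real.sqrt d : ℂ) ≠ 0 := fun h => hdC (by rw [← hsq, h, zero_mul])
    field_simp
    ring
  have hvd : v ^ d = 1 := by rw [hv, ← map_pow, hω.pow_eq_one, map_one]
  have hζd : ζ ^ d = 1 := by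
    rw [hζ, mul_pow, ← pow_mul, ← pow_mul, mul_comm _ d, mul_comm _ d, pow_mul, pow_mul, hvd,
      hω.pow_eq_one, one_pow, one_pow, one_mul]
  have hζ1 : ζ = 1 ↔ a - k = a' - k' := by
    have h1 : ζ = 1 ↔ w ^ (a'.val + k.val) = w ^ (a.val + k'.val) := by
      have hvw : v ^ (a.val + k'.val) * w ^ (a.val + k'.val) = 1 := by
        rw [← mul_pow, hc, one_pow]
      have hv0 : v ^ (a.val + k'.val) ≠ 0 := left_ne_zero_of_mul_eq_one hvw
      rw [hζ, ← hvw]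
      exact mul_right_inj' hv0
    have hfin : IsOfFinOrder w :=
      isOfFinOrder_iff_pow_eq_one.2 ⟨d, Nat.pos_of_ne_zero hd, hω.pow_eq_one⟩
    rw [h1, hfin.pow_eq_pow_iff_modEq, ← hω.eq_orderOf, sub_eq_sub_iff_add_eq_add,
      Fin.ext_iff, Fin.val_add, Fin.val_add]
    exact eq_comm
  rw [Finset.sum_congr rfl fun x _ => hterm x, ← Finset.sum_mul,
    Fin.sum_univ_eq_sum_range (fun n => ζ ^ n)]
  split_ifs with h
  · rw [hζ1.2 h]
    simp [hdC]
  · have hne : ζ ≠ 1 := fun e => h (hζ1.1 e)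
    rw [geom_sum_eq hne, hζd]
    simp

/-- The controlled shift `(a, k, s) ↦ (a - k, k, s)`. -/
def controlledShift (d : ℕ) [NeZero d] (r₂ : Type*) :
    Fin d × Fin d × r₂ ≃ Fin d × Fin d × r₂ where
  toFun t := (t.1 - t.2.1, t.2)
  invFun t := (t.1 + t.2.1, t.2)
  left_inv t := by simp
  right_inv t := by simp

section Security

variable {d : ℕ} {β r₂ : Type*} [Fintype β] [Fintype r₂]

theorem cqMarginalX_sub_idealKey [NeZero d] (ψ : Fin d × β × (Fin d × r₂) → ℂ)
    (M : Matrix (Fin d × r₂) β ℂ)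
    (hψ : ∀ a b k s, ψ (a, b, (k, s)) = if k = a then M (k, s) b else 0) :
    cqMarginalX ψ - idealKey ψ = (kroneckerMap (· * ·) (1 : Matrix (Fin d) (Fin d) ℂ)
      ((d : ℂ)⁻¹ • (M * Mᴴ - dephase Prod.fst (M * Mᴴ)))).submatrix
        (controlledShift d r₂) (controlledShift d r₂) := by
  have hcond : ∀ x b k s, condVecX ψ x (b, (k, s)) = (starRingEnd ℂ) (xVec d x k) * M (k, s) b := by
    intro x b k s
    simp [condVecX, hψ]
  have hθ : ∀ x k s k' s', thetaR ψ x (k, s) (k', s')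
      = (starRingEnd ℂ) (xVec d x k) * xVec d x k' * (M * Mᴴ) (k, s) (k', s') := by
    intro x k s k' s'
    simp only [thetaR, of_apply, hcond, Matrix.mul_apply, Finset.mul_sum, map_mul,
      Complex.conj_conj, conjTranspose_apply]
    refine Finset.sum_congr rfl fun b _ => ?_
    rw [← starRingEnd_apply]
    ring
  have hσ : reducedR ψ = dephase Prod.fst (M * Mᴴ) := by
    ext ⟨k, s⟩ ⟨k', s'⟩
    simp only [reducedR, of_apply, hψ, dephase]
    rw [Finset.sum_eq_single k (fun z _ hz => by simp [hz.symm]) (by simp)]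
    by_cases h : k = k'
    · simp [h, Matrix.mul_apply]
    · simp [h, Ne.symm h]
  ext ⟨a, k, s⟩ ⟨a', k', s'⟩
  have hcq : cqMarginalX ψ (a, k, s) (a', k', s')
      = (if a - k = a' - k' then (d : ℂ)⁻¹ else 0) * (M * Mᴴ) (k, s) (k', s') := by
    rw [← sum_xVec_mul, Finset.sum_mul]
    simp only [cqMarginalX, of_apply, hθ]
    exact Finset.sum_congr rfl fun x _ => by ring
  rw [Matrix.sub_apply, hcq]
  simp only [idealKey, of_apply, hσ, submatrix_apply, kroneckerMap_apply, controlledShift,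
    Equiv.coe_fn_mk, Matrix.smul_apply, Matrix.sub_apply, one_apply, smul_eq_mul, dephase]
  by_cases hk : k = k'
  · subst hk
    by_cases h : a = a' <;> simp [h]
  · simp [hk]

theorem trace_mul_re_le_two_mul_pSecure [DecidableEq β] [DecidableEq r₂] [NeZero d]
    (ψ : Fin d × β × (Fin d × r₂) → ℂ) (M : Matrix (Fin d × r₂) β ℂ)
    (hψ : ∀ a b k s, ψ (a, b, (k, s)) = if k = a then M (k, s) b else 0)
    {S : Matrix (Fin d × r₂) (Fin d × r₂) ℂ} (hS : S * Sᴴ = 1) :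
    (S * (M * Mᴴ - dephase Prod.fst (M * Mᴴ))).trace.re ≤ 2 * pSecure ψ := by
  have hdC : (d : ℂ) ≠ 0 := by exact_mod_cast NeZero.ne d
  set e := controlledShift d r₂
  set D := M * Mᴴ - dephase Prod.fst (M * Mᴴ) with hD
  set L := (kroneckerMap (· * ·) (1 : Matrix (Fin d) (Fin d) ℂ) S).submatrix e e with hL
  have hLL : L * Lᴴ = 1 := by
    rw [hL, conjTranspose_submatrix, submatrix_mul_equiv, conjTranspose_kronecker,
      ← mul_kronecker_mul, hS, conjTranspose_one, Matrix.one_mul, one_kronecker_one,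
      submatrix_one_equiv]
  have h := trace_mul_re_le_traceNorm hLL (cqMarginalX ψ - idealKey ψ)
  have htr : (L * (cqMarginalX ψ - idealKey ψ)).trace = (S * D).trace := by
    rw [cqMarginalX_sub_idealKey ψ M hψ, hL, submatrix_mul_equiv, ← mul_kronecker_mul,
      ← hD]
    rw [show ∀ K : Matrix (Fin d × Fin d × r₂) (Fin d × Fin d × r₂) ℂ,
      (K.submatrix e e).trace = K.trace from fun K => e.sum_comp fun i => K i i,
      trace_kronecker]
    simp [hdC]
  rw [htr] at h
  rw [pSecure, traceDist]
  linarith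

end Security

/-- If H(Z^A|R)=0 (the state has the form ∑_z √p_z |z⟩_A ⊗ |φ_z⟩_{BR₂} ⊗ |z⟩_{R₁},
suitably reordered) and X^A is ε-secure against R = R₁R₂, then Z^A is √(2ε)-recoverable from B. -/
theorem secure_implies_recoverable_caseB {d : ℕ} (hd : 1 ≤ d)
    {β r₂ : Type*} [Fintype β] [DecidableEq β] [Fintype r₂] [DecidableEq r₂]
    (p : Fin d → ℝ) (hp0 : ∀ z, 0 ≤ p z) (hp1 : ∑ z, p z = 1)
    (φ : Fin d → β × r₂ → ℂ) (hφ : ∀ z, ∑ t, ‖φ z t‖ ^ 2 = 1)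
    (ψ : Fin d × β × (Fin d × r₂) → ℂ)
    (hform : ∀ a b k s, ψ (a, b, (k, s))
        = (Real.sqrt (p a) : ℂ) * (if k = a then 1 else 0) * φ a (b, s))
    (ε : ℝ) (hε0 : 0 ≤ ε)
    (hsec : pSecure ψ ≤ ε) :
    ∃ Λ : Fin d → Matrix β β ℂ,
      (∀ z, (Λ z).PosSemidef) ∧ (∑ z, Λ z = 1) ∧
      1 - Real.sqrt (2 * ε) ≤ pGuess ψ Λ := by
  have : NeZero d := ⟨by omega⟩
  set M : Matrix (Fin d × r₂) β ℂ :=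
    Matrix.of fun i b => (Real.sqrt (p i.1) : ℂ) * φ i.1 (b, i.2) with hM
  have hψ : ∀ a b k s, ψ (a, b, (k, s)) = if k = a then M (k, s) b else 0 := by
    intro a b k s
    rw [hform]
    split_ifs with h <;> simp [hM, h]
  have hM1 : (M * Mᴴ).trace = 1 := by
    have hblock : ∀ k, ∑ s, ∑ b, ‖M (k, s) b‖ ^ 2 = p k := by
      intro k
      have hk := hφ k
      rw [Fintype.sum_prod_type, Finset.sum_comm] at hk
      simp only [hM, of_apply, norm_mul, mul_pow, ← Finset.mul_sum, hk, mul_one,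
        Complex.norm_real, Real.norm_eq_abs, sq_abs, Real.sq_sqrt (hp0 k)]
    simp only [trace, diag_apply, mul_conjTranspose_self_apply_self]
    rw [← Complex.ofReal_sum, Fintype.sum_prod_type]
    simp only [hblock, hp1, Complex.ofReal_one]
  obtain ⟨Λ, hΛ, hΛ1, hg⟩ := exists_povm_of_near_dephase (δ := 2 * ε) Prod.fst (0 : Fin d) M hM1
    fun S hS => (trace_mul_re_le_two_mul_pSecure ψ M hψ hS).trans (by linarith)
  refine ⟨fun z => (Λ z)ᵀ, fun z => (hΛ z).transpose, ?_, ?_⟩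
  · rw [← transpose_sum, hΛ1, transpose_one]
  have hpg : pGuess ψ (fun z => (Λ z)ᵀ) = (∑ i, (M * Λ (Prod.fst i) * Mᴴ) i i).re := by
    rw [pGuess, Fintype.sum_prod_type]
    congr 1
    refine Finset.sum_congr rfl fun z _ => ?_
    have hs : ∀ b b', ∑ s, (starRingEnd ℂ) (ψ (z, b, s)) * (Λ z)ᵀ b b' * ψ (z, b', s)
        = ∑ s, (starRingEnd ℂ) (M (z, s) b) * Λ z b' b * M (z, s) b' := by
      intro b b'
      rw [Fintype.sum_prod_type, Finset.sum_eq_single z (fun k _ hk => by simp [hψ, hk]) (by simp)]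
      simp [hψ]
    simp only [hs, Matrix.mul_apply, Finset.sum_mul, conjTranspose_apply]
    rw [Finset.sum_congr rfl fun b _ => Finset.sum_comm, Finset.sum_comm]
    refine Finset.sum_congr rfl fun s _ => Finset.sum_congr rfl fun b _ =>
      Finset.sum_congr rfl fun b' _ => ?_
    rw [← starRingEnd_apply]
    ring
  rw [hpg]
  have hpos : 0 ≤ (∑ i, (M * Λ (Prod.fst i) * Mᴴ) i i).re := by
    rw [Complex.re_sum]
    exact Finset.sum_nonneg fun i _ =>
      (Complex.le_def.1 (((hΛ i.1).mul_mul_conjTranspose_same M).diag_nonneg (i := i))).1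
  have hsqrt := Real.sq_sqrt (show 0 ≤ 2 * ε by linarith)
  have hsqrt0 := Real.sqrt_nonneg (2 * ε)
  by_cases h : Real.sqrt (2 * ε) ≤ 1
  · nlinarith
  · linarith
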